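/- There exist absolute constants c, C > 0 such that for all integers n ≥ m ≥ 1, writing u = n/m, one has c·u·log(1 + (log u)/m) ≤ log( p_{n,m}/ρ(u) ) ≤ C·u·log(1 + (log u)/m). -/

import Mathlib

open Real

noncomputable section

/-- Predicate characterizing the Dickman function `ρ : [0,∞) → (0,∞)`:
continuous on `[0,∞)`, positive, equal to `1` on `[0,1]`, and satisfying the
delay differential equation `t·ρ'(t) + ρ(t-1) = 0` for `t > 1`. -/
def IsDickman (ρ : ℝ → ℝ) : Prop :=
  ContinuousOn ρ (Set.Ici 0) ∧
  (∀ t : ℝ, 0 ≤ t → 0 < ρ t) ∧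
  (∀ t ∈ Set.Icc (0:ℝ) 1, ρ t = 1) ∧
  (∀ t : ℝ, 1 < t → HasDerivAt ρ (-(ρ (t - 1)) / t) t)

/-- `ξ(u)`: for `u > 1`, the unique positive solution of `e^ξ = 1 + u·ξ`; otherwise `0`. -/
def xi (u : ℝ) : ℝ :=
  open Classical in
  if h : ∃ x : ℝ, 0 < x ∧ Real.exp x = 1 + u * x then h.choose else 0

/-- `p_{n,m}`: probability that a uniformly random permutation of `{1,…,n}` is `m`-friable,
i.e. has no cycle of length greater than `m`. -/
def permProb (n m : ℕ) : ℝ :=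
  (Nat.card {σ : Equiv.Perm (Fin n) // ∀ c ∈ σ.cycleType, c ≤ m} : ℝ) /
    (Nat.factorial n : ℝ)

/-- `p_{n,m,q}`: proportion of monic polynomials of degree `n` over a finite field `F`
(of cardinality `q`) that are `m`-friable, i.e. all of whose monic irreducible factors
have degree at most `m`. -/
def polyProb (F : Type) [Field F] [Fintype F] (n m : ℕ) : ℝ :=
  (Nat.card {f : Polynomial F // f.Monic ∧ f.natDegree = n ∧
      ∀ p : Polynomial F, p.Monic → Irreducible p → p ∣ f → p.natDegree ≤ m} : ℝ) /
    (Fintype.card F : ℝ) ^ n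

/-- `F_q(z) = ∏_{deg P ≤ m} (1 - (z/q)^{deg P})⁻¹`, the product over monic irreducible
polynomials `P` over `F` of degree at most `m`. -/
def FqFun (F : Type) [Field F] [Fintype F] (m : ℕ) (z : ℝ) : ℝ :=
  ∏ᶠ p ∈ {p : Polynomial F | p.Monic ∧ Irreducible p ∧ p.natDegree ≤ m},
    (1 - (z / (Fintype.card F : ℝ)) ^ p.natDegree)⁻¹

/-- `G_q(z) = F_q(z) · exp(-∑_{i=1}^m z^i/i)`. -/
def Gq (F : Type) [Field F] [Fintype F] (m : ℕ) (z : ℝ) : ℝ :=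
  FqFun F m z * Real.exp (-(∑ i ∈ Finset.Icc 1 m, z ^ i / (i : ℝ)))

/-- The coefficients `d_{m,i}`. -/
def dcoef (m i : ℕ) : ℝ :=
  if i = m then -(1 / (m : ℝ)) * ∑ j ∈ Finset.Icc 2 m, (1 : ℝ) / (j : ℝ)
  else Real.Gamma ((i : ℝ) + (i : ℝ) / (m : ℝ)) /
    (((m : ℝ) - (i : ℝ)) * (Nat.factorial i : ℝ) * Real.Gamma (1 + (i : ℝ) / (m : ℝ)))

/-- `T(s) = ∫₀^s ((e^t - 1)/t)·((t/m)/(1 - e^{-t/m}) - 1) dt`, integrand extended by `0` at `t = 0`. -/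
def Tfun (m : ℕ) (s : ℝ) : ℝ :=
  ∫ t in (0:ℝ)..s,
    if t = 0 then 0 else
      ((Real.exp t - 1) / t) * ((t / (m : ℝ)) / (1 - Real.exp (-t / (m : ℝ))) - 1)

end

/-!
Write `p_n` for `permProb n m`. Sorting permutations by cycle type gives the recurrence
`n p_n = p_{n-1} + ⋯ + p_{n-m}`, a discrete version of `v ρ(v) = ∫_{v-1}^v ρ`. Comparing the
integral with its Riemann sums shows by induction that `p_n ≤ ρ((n+1)/(m+1))`, as `ρ` is antitone.
Convexity of `ρ` on `[1, ∞)` improves the comparison by half a cell, which leaves room for a bound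
`p_n ≥ ρ((n+a)/(m+a))` with a small `a > 0`, as long as `log u` is at most a multiple of `m`.
The decay rate `-ρ'/ρ` is increasing and comparable to `1 + log u`, so that both shifts, which move
the argument by an amount of order `(u-1)/m`, change `log ρ` by one of order `u (log u)/m`.

When `log u` is large compared with `m`, the estimate
`log ρ(u) = -u log u - u log (1 + log u) + O(u)` is compared with `log p_n ≈ -u log n`, whose upper
bound comes from Rankin's trick and whose lower bound from iterating `p_{n-m} ≤ n p_n`.
-/

section CycleWeight

open Nat Multiset

/-- The proportion of permutations whose multiset of cycle lengths, fixed points included, is `s`: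
the reciprocal of the order of the centralizer of any such permutation. -/
noncomputable def cycleWeight (s : Multiset ℕ) : ℝ :=
  (s.prod * ∏ i ∈ s.toFinset, ((s.count i)! : ℝ))⁻¹

lemma mul_count_mul_cycleWeight_cons (s : Multiset ℕ) {j : ℕ} (hj : j ≠ 0) :
    j * (j ::ₘ s).count j * cycleWeight (j ::ₘ s) = cycleWeight s := by
  have prod_factorial_extend : ∏ i ∈ s.toFinset, ((s.count i)! : ℝ) =
      ∏ i ∈ insert j s.toFinset, ((s.count i)! : ℝ) :=
    Finset.prod_subset (Finset.subset_insert j _) fun i _ hi ↦ by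
      rw [count_eq_zero_of_notMem (mt mem_toFinset.2 hi), factorial_zero, cast_one]
  have prod_factorial_erase : ∏ i ∈ (insert j s.toFinset).erase j, (((j ::ₘ s).count i)! : ℝ) =
      ∏ i ∈ (insert j s.toFinset).erase j, ((s.count i)! : ℝ) :=
    Finset.prod_congr rfl fun i hi ↦ by rw [count_cons_of_ne (Finset.ne_of_mem_erase hi)]
  have hmem : j ∈ insert j s.toFinset := Finset.mem_insert_self _ _
  have hj' : (j : ℝ) ≠ 0 := cast_ne_zero.2 hj
  rw [cycleWeight, cycleWeight, prod_factorial_extend, toFinset_cons,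
    ← Finset.mul_prod_erase _ _ hmem, ← Finset.mul_prod_erase _ _ hmem, prod_factorial_erase,
    count_cons_self, prod_cons, factorial_succ]
  push_cast
  field_simp

lemma factorial_mul_cycleWeight_add_replicate_one {s : Multiset ℕ} (hs : 1 ∉ s) (k : ℕ) :
    k ! * cycleWeight (s + replicate k 1) = cycleWeight s := by
  induction k with
  | zero => simp
  | succ k ih =>
    have h := mul_count_mul_cycleWeight_cons (s + replicate k 1) one_ne_zero
    rw [count_cons_self, Multiset.count_add, count_replicate_self, count_eq_zero_of_notMem hs,
      zero_add, cast_one, one_mul] at h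
    rw [replicate_succ, add_cons, ← ih, ← h, factorial_succ]
    push_cast
    ring

lemma filter_two_le_add_replicate_one {s : Multiset ℕ} (hs : 0 ∉ s) :
    s.filter (2 ≤ ·) + replicate (s.sum - (s.filter (2 ≤ ·)).sum) 1 = s := by
  have ones : s.filter (¬ 2 ≤ ·) = replicate (s.filter (¬ 2 ≤ ·)).card 1 := by
    refine eq_replicate.2 ⟨rfl, fun b hb ↦ ?_⟩
    obtain ⟨hb, hb2⟩ := mem_filter.1 hb
    have : b ≠ 0 := fun h ↦ hs (h ▸ hb)
    omega
  have hsum : s.sum = (s.filter (2 ≤ ·)).sum + (s.filter (¬ 2 ≤ ·)).card := by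
    conv_lhs => rw [← filter_add_not (2 ≤ ·) s, sum_add, ones]
    simp
  rw [hsum, Nat.add_sub_cancel_left, ← ones, filter_add_not]

lemma card_filter_partition_eq {α : Type*} [Fintype α] [DecidableEq α]
    (l : (Fintype.card α).Partition) :
    (Finset.card {σ : Equiv.Perm α | σ.partition = l} : ℝ) =
      (Fintype.card α)! * cycleWeight l.parts := by
  set s := l.parts.filter (2 ≤ ·)
  have two_le : ∀ a ∈ s, 2 ≤ a := fun a ha ↦ (mem_filter.1 ha).2
  have parts_eq : s + replicate (Fintype.card α - s.sum) 1 = l.parts := by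
    simpa only [l.parts_sum] using
      filter_two_le_add_replicate_one fun h ↦ (l.parts_pos h).ne' rfl
  have sum_le : s.sum ≤ Fintype.card α := by
    have := congrArg Multiset.sum parts_eq
    rw [l.parts_sum, Multiset.sum_add] at this
    omega
  have partition_eq_iff (σ : Equiv.Perm α) : σ.partition = l ↔ σ.cycleType = s := by
    refine ⟨fun h ↦ by rw [← Equiv.Perm.filter_parts_partition_eq_cycleType, h], fun h ↦ ?_⟩
    rw [Nat.Partition.ext_iff, Equiv.Perm.parts_partition, ← Equiv.Perm.sum_cycleType, h, parts_eq]
  have hcard := Equiv.Perm.card_of_cycleType_mul_eq α s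
  rw [if_pos ⟨sum_le, two_le⟩] at hcard
  have hweight := factorial_mul_cycleWeight_add_replicate_one
    (fun h ↦ absurd (two_le 1 h) (by norm_num)) (Fintype.card α - s.sum)
  have prod_pos : 0 < s.prod * ∏ i ∈ s.toFinset, (s.count i)! :=
    Nat.mul_pos (Multiset.prod_pos fun i hi ↦ zero_lt_two.trans_le (two_le i hi))
      (Finset.prod_pos fun i _ ↦ factorial_pos _)
  have hinv : cycleWeight s = ((s.prod * ∏ i ∈ s.toFinset, (s.count i)! : ℕ) : ℝ)⁻¹ := by
    rw [cycleWeight, Nat.cast_mul, Nat.cast_prod]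
  have : ((s.prod * ∏ i ∈ s.toFinset, (s.count i)! : ℕ) : ℝ) ≠ 0 := cast_ne_zero.2 prod_pos.ne'
  rw [parts_eq, hinv] at hweight
  have hweight_mul := congrArg (· * ((s.prod * ∏ i ∈ s.toFinset, (s.count i)! : ℕ) : ℝ)) hweight
  simp only [inv_mul_cancel₀ this] at hweight_mul
  simp_rw [partition_eq_iff]
  rw [← hcard, mul_assoc (_ !), Nat.cast_mul, Nat.cast_mul]
  linear_combination (-(Finset.card {σ : Equiv.Perm α | σ.cycleType = s} : ℝ)) * hweight_mul

/-- The total weight of the partitions of `n` into parts of size at most `m`; for `m ≥ 1` this is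
`p_{n,m}`. -/
noncomputable def friableWeight (m n : ℕ) : ℝ :=
  ∑ l ∈ Nat.Partition.restricted n (· ≤ m), cycleWeight l.parts

lemma card_friable_eq_factorial_mul_friableWeight {α : Type*} [Fintype α] [DecidableEq α]
    {m : ℕ} (hm : 1 ≤ m) :
    (Nat.card {σ : Equiv.Perm α // ∀ c ∈ σ.cycleType, c ≤ m} : ℝ) =
      (Fintype.card α)! * friableWeight m (Fintype.card α) := by
  have friable_iff (σ : Equiv.Perm α) :
      (∀ c ∈ σ.cycleType, c ≤ m) ↔
        σ.partition ∈ Nat.Partition.restricted (Fintype.card α) (· ≤ m) := by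
    simp only [Nat.Partition.restricted, Finset.mem_filter, Finset.mem_univ, true_and,
      Equiv.Perm.parts_partition, mem_add, or_imp, forall_and, iff_self_and]
    exact fun _ c hc ↦ eq_of_mem_replicate hc ▸ hm
  simp only [friable_iff, Nat.card_eq_fintype_card, Fintype.card_subtype]
  rw [Finset.card_eq_sum_card_fiberwise (f := Equiv.Perm.partition)
      (t := Nat.Partition.restricted (Fintype.card α) (· ≤ m))
      fun σ hσ ↦ by simpa using hσ, Nat.cast_sum, friableWeight, Finset.mul_sum]
  refine Finset.sum_congr rfl fun l hl ↦ ?_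
  rw [← card_filter_partition_eq, Finset.filter_filter]
  congr 3 with σ
  exact and_iff_right_of_imp fun h ↦ h ▸ hl

lemma permProb_eq_friableWeight {m : ℕ} (hm : 1 ≤ m) (n : ℕ) :
    permProb n m = friableWeight m n := by
  rw [permProb, card_friable_eq_factorial_mul_friableWeight hm, Fintype.card_fin,
    mul_div_cancel_left₀ _ (cast_ne_zero.2 (factorial_ne_zero n))]

lemma sum_mul_count_mul_cycleWeight {n j : ℕ} (hj : 1 ≤ j) (hjn : j ≤ n) (g : Multiset ℕ → ℝ) :
    ∑ l : n.Partition, g l.parts * (j * l.parts.count j * cycleWeight l.parts) =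
      ∑ l : (n - j).Partition, g (j ::ₘ l.parts) * cycleWeight l.parts := by
  calc ∑ l : n.Partition, g l.parts * (j * l.parts.count j * cycleWeight l.parts)
      = ∑ l : {l : n.Partition // j ∈ l.parts},
          g l.1.parts * (j * l.1.parts.count j * cycleWeight l.1.parts) := by
        rw [← Finset.sum_subtype (Finset.univ.filter (j ∈ ·.parts)) (by simp)
          fun l : n.Partition ↦ g l.parts * (j * l.parts.count j * cycleWeight l.parts)]
        refine (Finset.sum_filter_of_ne fun l _ h ↦ ?_).symm
        contrapose! h
        simp [count_eq_zero_of_notMem h]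
    _ = ∑ l : (n - j).Partition, g (j ::ₘ l.parts) *
          (j * (j ::ₘ l.parts).count j * cycleWeight (j ::ₘ l.parts)) := by
        simp only [← (Nat.Partition.partitionWithPartEquiv hj hjn).symm.sum_comp,
          Nat.Partition.partitionWithPartEquiv_symm_apply_parts]
    _ = ∑ l : (n - j).Partition, g (j ::ₘ l.parts) * cycleWeight l.parts := by
        simp only [mul_count_mul_cycleWeight_cons _ (one_le_iff_ne_zero.1 hj)]

lemma mul_friableWeight (m n : ℕ) :
    n * friableWeight m n = ∑ j ∈ Finset.Icc 1 (min m n), friableWeight m (n - j) := by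
  have sum_count (l : n.Partition) : (n : ℝ) = ∑ j ∈ Finset.Icc 1 n, (j : ℝ) * l.parts.count j := by
    have : l.parts.toFinset ⊆ Finset.Icc 1 n := fun j hj ↦
      Finset.mem_Icc.2 ⟨l.parts_pos (mem_toFinset.1 hj), l.le_of_mem_parts (mem_toFinset.1 hj)⟩
    conv_lhs => rw [← l.parts_sum, Finset.sum_multiset_count_of_subset l.parts _ this]
    simp [mul_comm]
  have friable_eq (k : ℕ) : friableWeight m k =
      ∑ l : k.Partition, (if ∀ c ∈ l.parts, c ≤ m then 1 else 0) * cycleWeight l.parts := by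
    simp only [friableWeight, Nat.Partition.restricted, Finset.sum_filter, ite_mul, one_mul,
      zero_mul]
  have range_eq : Finset.Icc 1 (min m n) = {j ∈ Finset.Icc 1 n | j ≤ m} := by
    ext j
    simp only [Finset.mem_Icc, Finset.mem_filter, le_min_iff]
    tauto
  calc n * friableWeight m n
      = ∑ j ∈ Finset.Icc 1 n, ∑ l : n.Partition, (if ∀ c ∈ l.parts, c ≤ m then 1 else 0) *
          (j * l.parts.count j * cycleWeight l.parts) := by
        rw [Finset.sum_comm, friable_eq, Finset.mul_sum]
        refine Finset.sum_congr rfl fun l _ ↦ ?_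
        rw [← Finset.mul_sum, ← Finset.sum_mul, ← sum_count]
        ring
    _ = ∑ j ∈ Finset.Icc 1 n, if j ≤ m then friableWeight m (n - j) else 0 := by
        refine Finset.sum_congr rfl fun j hj ↦ ?_
        obtain ⟨hj, hjn⟩ := Finset.mem_Icc.1 hj
        rw [sum_mul_count_mul_cycleWeight hj hjn fun s ↦ if ∀ c ∈ s, c ≤ m then 1 else 0]
        by_cases hjm : j ≤ m <;> simp [hjm, friable_eq]
    _ = ∑ j ∈ Finset.Icc 1 (min m n), friableWeight m (n - j) := by
        rw [range_eq, Finset.sum_filter]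

end CycleWeight

section PermProb

open Finset

variable {m n : ℕ}

lemma permProb_pos (n m : ℕ) : 0 < permProb n m := by
  have : Nonempty {σ : Equiv.Perm (Fin n) // ∀ c ∈ σ.cycleType, c ≤ m} := ⟨1, by simp⟩
  exact div_pos (Nat.cast_pos.2 Nat.card_pos) (Nat.cast_pos.2 n.factorial_pos)

lemma permProb_eq_one_of_le (hnm : n ≤ m) : permProb n m = 1 := by
  have friable (σ : Equiv.Perm (Fin n)) : ∀ c ∈ σ.cycleType, c ≤ m := fun c hc ↦
    (Equiv.Perm.le_card_support_of_mem_cycleType hc).trans <|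
      (card_le_univ _).trans (by simpa using hnm)
  have hcard : Nat.card {σ : Equiv.Perm (Fin n) // ∀ c ∈ σ.cycleType, c ≤ m} = n.factorial := by
    rw [Nat.card_congr (Equiv.subtypeUnivEquiv friable), Nat.card_perm, Nat.card_fin]
  rw [permProb, hcard, div_self (Nat.cast_ne_zero.2 n.factorial_ne_zero)]

lemma mul_permProb (hm : 1 ≤ m) (n : ℕ) :
    n * permProb n m = ∑ i ∈ range (min m n), permProb (n - (i + 1)) m := by
  simp only [permProb_eq_friableWeight hm, mul_friableWeight]
  rw [← Ico_add_one_right_eq_Icc, sum_Ico_eq_sum_range, Nat.add_sub_cancel]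
  simp only [add_comm 1]

lemma succ_mul_permProb_succ (hm : 1 ≤ m) (hmn : m ≤ n) :
    ((n : ℝ) + 1) * permProb (n + 1) m = (n + 1) * permProb n m - permProb (n - m) m := by
  have hn := mul_permProb hm n
  have hn1 := mul_permProb hm (n + 1)
  have window_shift := sum_range_succ (fun i ↦ permProb (n - i) m) m
  rw [sum_range_succ', Nat.sub_zero] at window_shift
  rw [min_eq_left hmn] at hn
  rw [min_eq_left (by omega)] at hn1
  simp only [Nat.add_sub_add_right] at hn1
  push_cast at hn1
  linarith

lemma permProb_sub_le (hm : 1 ≤ m) (hmn : m ≤ n) : permProb (n - m) m ≤ n * permProb n m := by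
  rw [mul_permProb hm, min_eq_left hmn]
  have := single_le_sum (f := fun i ↦ permProb (n - (i + 1)) m)
    (fun i _ ↦ (permProb_pos _ m).le) (mem_range.2 (Nat.sub_lt hm one_pos))
  simpa only [Nat.sub_add_cancel hm] using this

lemma neg_mul_log_le_log_permProb (hm : 1 ≤ m) {N : ℕ} (hnN : n ≤ N) :
    -(n / m * log N) ≤ log (permProb n m) := by
  induction n using Nat.strong_induction_on with
  | _ n ih =>
    rcases le_or_gt n m with hnm | hmn
    · rw [permProb_eq_one_of_le hnm, log_one]
      have := log_natCast_nonneg N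
      exact neg_nonpos.2 (by positivity)
    have hm' : (0 : ℝ) < m := Nat.cast_pos.2 hm
    have hn' : (0 : ℝ) < n := Nat.cast_pos.2 (by omega)
    have step := log_le_log (permProb_pos _ m) (permProb_sub_le hm hmn.le)
    rw [log_mul hn'.ne' (permProb_pos n m).ne'] at step
    have hlog := log_le_log hn' (Nat.cast_le.2 hnN)
    have prev := ih (n - m) (by omega) (by omega)
    rw [Nat.cast_sub hmn.le, sub_div, div_self hm'.ne'] at prev
    linarith

end PermProb

section RankinBound

open Finset

variable {m : ℕ} {x : ℝ}

lemma sum_deriv_permProb_mul_pow_le (hm : 1 ≤ m) (hx : 0 ≤ x) (N : ℕ) :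
    ∑ n ∈ range (N + 1), permProb n m * (n * x ^ (n - 1)) ≤
      (∑ n ∈ range (N + 1), permProb n m * x ^ n) * ∑ i ∈ range m, x ^ i := by
  set g : ℕ → ℝ := fun n ↦ permProb n m * x ^ n
  have g_nonneg (n : ℕ) : 0 ≤ g n := mul_nonneg (permProb_pos n m).le (pow_nonneg hx n)
  have expand (n : ℕ) : permProb n m * (n * x ^ (n - 1)) =
      ∑ i ∈ range (min m n), g (n - (i + 1)) * x ^ i := by
    rw [← mul_assoc, mul_comm (permProb n m), mul_permProb hm, sum_mul]
    refine sum_congr rfl fun i hi ↦ ?_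
    have : n - 1 = n - (i + 1) + i := by
      have := mem_range.1 hi
      omega
    rw [this, pow_add, ← mul_assoc]
  calc ∑ n ∈ range (N + 1), permProb n m * (n * x ^ (n - 1))
      = ∑ n ∈ range (N + 1), ∑ i ∈ range (min m n), g (n - (i + 1)) * x ^ i :=
        sum_congr rfl fun n _ ↦ expand n
    _ = ∑ i ∈ range m, ∑ n ∈ Ico (i + 1) (N + 1), g (n - (i + 1)) * x ^ i :=
        sum_comm' fun n i ↦ by simp only [mem_range, mem_Ico]; omega
    _ = ∑ i ∈ range m, (∑ n ∈ range (N - i), g n) * x ^ i := by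
        simp only [← sum_mul, sum_Ico_eq_sum_range, Nat.add_sub_cancel_left, Nat.add_sub_add_right]
    _ ≤ ∑ i ∈ range m, (∑ n ∈ range (N + 1), g n) * x ^ i := by
        gcongr with i
        · exact fun n _ _ ↦ g_nonneg n
        · omega
    _ = (∑ n ∈ range (N + 1), g n) * ∑ i ∈ range m, x ^ i := (mul_sum _ _ _).symm

lemma sum_permProb_mul_pow_le_exp (hm : 1 ≤ m) (hx : 0 ≤ x) (N : ℕ) :
    ∑ n ∈ range (N + 1), permProb n m * x ^ n ≤ exp (∑ i ∈ range m, x ^ (i + 1) / (i + 1)) := by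
  set S : ℝ → ℝ := fun y ↦ ∑ n ∈ range (N + 1), permProb n m * y ^ n with hS
  set Q : ℝ → ℝ := fun y ↦ ∑ i ∈ range m, y ^ (i + 1) / (i + 1) with hQ
  have hasDerivAt_S (y : ℝ) :
      HasDerivAt S (∑ n ∈ range (N + 1), permProb n m * (n * y ^ (n - 1))) y :=
    HasDerivAt.fun_sum fun n _ ↦ (hasDerivAt_pow n y).const_mul _
  have hasDerivAt_Q (y : ℝ) : HasDerivAt Q (∑ i ∈ range m, y ^ i) y :=
    HasDerivAt.fun_sum fun i _ ↦
      ((hasDerivAt_pow (i + 1) y).div_const ((i : ℝ) + 1)).congr_deriv (by push_cast; field_simp)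
  have hasDerivAt_quot (y : ℝ) := (hasDerivAt_S y).mul (hasDerivAt_Q y).neg.exp
  have antitone_quot : AntitoneOn (S * fun y ↦ exp (-Q y)) (Set.Ici 0) := by
    refine antitoneOn_of_hasDerivWithinAt_nonpos (convex_Ici 0)
      (fun y _ ↦ (hasDerivAt_quot y).continuousAt.continuousWithinAt)
      (fun y _ ↦ (hasDerivAt_quot y).hasDerivWithinAt) fun y hy ↦ ?_
    rw [interior_Ici] at hy
    have := mul_le_mul_of_nonneg_right (sum_deriv_permProb_mul_pow_le hm (le_of_lt hy) N)
      (exp_pos (-Q y)).le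
    simp only [Pi.neg_apply, mul_neg, ← sub_eq_add_neg, sub_nonpos]
    exact this.trans_eq (by ring)
  have S_zero : S 0 = 1 := by simp [hS, sum_range_succ', permProb_eq_one_of_le]
  have Q_zero : Q 0 = 0 := by simp [hQ]
  have := antitone_quot Set.self_mem_Ici hx hx
  simp only [Pi.mul_apply, S_zero, Q_zero, neg_zero, exp_zero, mul_one] at this
  rwa [exp_neg, ← div_eq_mul_inv, div_le_one (exp_pos _)] at this

lemma permProb_mul_pow_le_exp (hm : 1 ≤ m) (hx : 0 ≤ x) (n : ℕ) :
    permProb n m * x ^ n ≤ exp (∑ i ∈ range m, x ^ (i + 1) / (i + 1)) :=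
  (single_le_sum (f := fun k ↦ permProb k m * x ^ k)
    (fun k _ ↦ mul_nonneg (permProb_pos k m).le (pow_nonneg hx k)) (self_mem_range_succ n)).trans
    (sum_permProb_mul_pow_le_exp hm hx n)

lemma sum_pow_succ_div_le (hm : 1 ≤ m) (hx : 8 / 3 ≤ x) :
    ∑ i ∈ range m, x ^ (i + 1) / (i + 1) ≤ 4 * x ^ m / m := by
  induction m, hm using Nat.le_induction with
  | base => simp only [range_one, sum_singleton, CharP.cast_eq_zero]; norm_num; linarith
  | succ m hm ih =>
    have hm' : (1 : ℝ) ≤ m := Nat.one_le_cast.2 hm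
    have hx' : 0 < x := by linarith
    have ratio : 4 * x ^ m / m ≤ 3 * x ^ (m + 1) / (m + 1) := by
      rw [div_le_div_iff₀ (by linarith) (by linarith), pow_succ]
      have : 4 * ((m : ℝ) + 1) ≤ 3 * x * m := by nlinarith
      linarith [mul_le_mul_of_nonneg_left this (pow_pos hx' m).le]
    calc ∑ i ∈ range (m + 1), x ^ (i + 1) / (i + 1 : ℝ)
        ≤ 4 * x ^ m / m + x ^ (m + 1) / (m + 1) := by rw [sum_range_succ]; gcongr
      _ ≤ 3 * x ^ (m + 1) / (m + 1) + x ^ (m + 1) / (m + 1) := by gcongr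
      _ = 4 * x ^ (m + 1) / ↑(m + 1) := by push_cast; ring

lemma log_permProb_le (hm : 1 ≤ m) {n : ℕ} (hmn : exp m ≤ n) :
    log (permProb n m) ≤ -(n / m * log n) + 4 * (n / m) := by
  have hm' : (0 : ℝ) < m := Nat.cast_pos.2 hm
  have hn : (0 : ℝ) < n := (exp_pos _).trans_le hmn
  -- `x = n ^ (1 / m)` balances the exponent `≈ x ^ m / m` against `n * log x`.
  set x := exp (log n / m) with hx_def
  have hx : 8 / 3 ≤ x := by
    have : 1 ≤ log n / m := (one_le_div hm').2 ((le_log_iff_exp_le hn).2 hmn)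
    linarith [exp_le_exp.2 this, exp_one_gt_d9]
  have pow_m : x ^ m = n := by rw [← exp_nat_mul, mul_div_cancel₀ _ hm'.ne', exp_log hn]
  have log_pow_n : log (x ^ n) = n / m * log n := by rw [log_pow, log_exp]; ring
  have bound := log_le_log (mul_pos (permProb_pos n m) (pow_pos (exp_pos _) n))
    (permProb_mul_pow_le_exp hm (exp_pos (log n / m)).le n)
  rw [← hx_def, log_mul (permProb_pos n m).ne' (pow_pos (exp_pos _) n).ne', log_pow_n,
    log_exp] at bound
  have := sum_pow_succ_div_le hm hx
  rw [pow_m, mul_div_assoc] at this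
  linarith

end RankinBound

/-- The Dickman function extended by the value `1` to the negative half-line, which makes it
continuous, positive and antitone on all of `ℝ`. -/
structure IsDickmanExt (ρ : ℝ → ℝ) : Prop where
  continuous : Continuous ρ
  pos : ∀ t, 0 < ρ t
  eq_one_of_le_one : ∀ t ≤ 1, ρ t = 1
  hasDerivAt : ∀ t, 1 < t → HasDerivAt ρ (-ρ (t - 1) / t) t

lemma IsDickman.isDickmanExt {ρ : ℝ → ℝ} (h : IsDickman ρ) :
    IsDickmanExt fun x ↦ ρ (max x 0) := by
  obtain ⟨continuousOn, pos, eq_one, hasDerivAt⟩ := h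
  refine ⟨continuousOn.comp_continuous (by fun_prop) fun x ↦ le_max_right x 0,
    fun t ↦ pos _ (le_max_right t 0),
    fun t ht ↦ eq_one _ ⟨le_max_right t 0, max_le ht zero_le_one⟩, fun t ht ↦ ?_⟩
  rw [max_eq_left (sub_nonneg.2 ht.le)]
  refine (hasDerivAt t ht).congr_of_eventuallyEq ?_
  filter_upwards [lt_mem_nhds (one_pos.trans ht)] with x hx
  rw [max_eq_left hx.le]

/-- The decay rate `-ρ'/ρ` of the Dickman function, with `ρ'` eliminated through the delay
differential equation. -/
noncomputable def decayRate (ρ : ℝ → ℝ) (t : ℝ) : ℝ := ρ (t - 1) / (t * ρ t)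

section ContinuousInduction

open Set

lemma pos_of_forall_Ico_pos {f : ℝ → ℝ} {a t : ℝ} (hf : ContinuousOn f (Ici a))
    (step : ∀ s, a ≤ s → (∀ x ∈ Ico a s, 0 < f x) → 0 < f s) (ht : a ≤ t) : 0 < f t := by
  by_contra! hft
  have hcont : ContinuousOn f (Icc a t) := hf.mono Icc_subset_Ici_self
  have hcompact : IsCompact (Icc a t ∩ f ⁻¹' Iic 0) :=
    isCompact_Icc.of_isClosed_subset (hcont.preimage_isClosed_of_isClosed isClosed_Icc isClosed_Iic)
      inter_subset_left
  obtain ⟨s, ⟨⟨has, hst⟩, hfs⟩, hs⟩ := hcompact.exists_isLeast ⟨t, ⟨ht, le_rfl⟩, hft⟩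
  refine absurd (step s has fun x hx ↦ ?_) (not_lt.2 hfs)
  by_contra! hfx
  exact hx.2.not_ge (hs ⟨⟨hx.1, hx.2.le.trans hst⟩, hfx⟩)

end ContinuousInduction

namespace IsDickmanExt

open Set

variable {ρ : ℝ → ℝ} {t u x y : ℝ}

lemma strictAntiOn (h : IsDickmanExt ρ) : StrictAntiOn ρ (Ici 1) := by
  refine strictAntiOn_of_hasDerivWithinAt_neg (convex_Ici 1) h.continuous.continuousOn
    (fun x hx ↦ (h.hasDerivAt x (interior_Ici.subset hx)).hasDerivWithinAt) fun x hx ↦ ?_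
  have hx : 1 < x := interior_Ici.subset hx
  exact div_neg_of_neg_of_pos (neg_neg_of_pos (h.pos _)) (one_pos.trans hx)

lemma antitone (h : IsDickmanExt ρ) : Antitone ρ := fun x y hxy ↦ by
  rcases le_total y 1 with hy | hy
  · rw [h.eq_one_of_le_one y hy, h.eq_one_of_le_one x (hxy.trans hy)]
  rcases le_total x 1 with hx | hx
  · rw [h.eq_one_of_le_one x hx, ← h.eq_one_of_le_one 1 le_rfl]
    exact h.strictAntiOn.antitoneOn self_mem_Ici hy hy
  · exact h.strictAntiOn.antitoneOn hx hy hxy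

lemma lt_sub_one (h : IsDickmanExt ρ) (ht : 1 < t) : ρ t < ρ (t - 1) := by
  rcases le_total (t - 1) 1 with ht' | ht'
  · rw [h.eq_one_of_le_one _ ht', ← h.eq_one_of_le_one 1 le_rfl]
    exact h.strictAntiOn self_mem_Ici ht.le ht
  · exact h.strictAntiOn ht' ht.le (sub_one_lt t)

lemma hasDerivAt_mul_self (h : IsDickmanExt ρ) (ht : 1 < t) :
    HasDerivAt (fun x ↦ x * ρ x) (ρ t - ρ (t - 1)) t := by
  have ht0 : t ≠ 0 := by positivity
  exact ((hasDerivAt_id t).fun_mul (h.hasDerivAt t ht)).congr_deriv (by simp; field_simp; ring)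

lemma integral_sub_one_self (h : IsDickmanExt ρ) (ht : 1 ≤ t) :
    ∫ x in (t - 1)..t, ρ x = t * ρ t := by
  have hcont := h.continuous
  have integrable (a b : ℝ) : IntervalIntegrable ρ MeasureTheory.volume a b :=
    hcont.intervalIntegrable a b
  have ftc : ∫ x in (1 : ℝ)..t, (ρ x - ρ (x - 1)) = t * ρ t - 1 * ρ 1 :=
    intervalIntegral.integral_eq_sub_of_hasDerivAt_of_le ht (by fun_prop)
      (fun x hx ↦ h.hasDerivAt_mul_self hx.1)
      (Continuous.intervalIntegrable (by fun_prop) _ _)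
  rw [intervalIntegral.integral_sub (integrable _ _)
      (Continuous.intervalIntegrable (by fun_prop) _ _),
    intervalIntegral.integral_comp_sub_right, sub_self,
    intervalIntegral.integral_interval_sub_interval_comm' (integrable _ _) (integrable _ _)
      (integrable _ _), h.eq_one_of_le_one 1 le_rfl] at ftc
  have integral_zero_one : ∫ x in (0 : ℝ)..1, ρ x = 1 := by
    rw [intervalIntegral.integral_congr (g := fun _ ↦ 1) fun x hx ↦ ?_]
    · simp
    · exact h.eq_one_of_le_one x (uIcc_of_le (zero_le_one' ℝ) ▸ hx).2
  rw [integral_zero_one] at ftc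
  linarith

lemma eq_one_sub_log (h : IsDickmanExt ρ) (ht : t ∈ Icc 1 2) : ρ t = 1 - log t := by
  have ftc : ∫ x in (1 : ℝ)..t, -x⁻¹ = ρ t - ρ 1 :=
    intervalIntegral.integral_eq_sub_of_hasDerivAt_of_le ht.1 h.continuous.continuousOn
      (fun x hx ↦ (h.hasDerivAt x hx.1).congr_deriv <| by
        rw [h.eq_one_of_le_one (x - 1) (by linarith [hx.2, ht.2]), neg_div, one_div])
      (intervalIntegral.intervalIntegrable_inv (fun x hx ↦ (by
        linarith [(uIcc_of_le ht.1 ▸ hx).1] : 0 < x).ne') continuousOn_id).neg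
  rw [intervalIntegral.integral_neg, integral_inv_of_pos one_pos (one_pos.trans_le ht.1), div_one,
    h.eq_one_of_le_one 1 le_rfl] at ftc
  linarith

lemma convexOn (h : IsDickmanExt ρ) : ConvexOn ℝ (Ici 1) ρ := by
  refine MonotoneOn.convexOn_of_deriv (convex_Ici 1) h.continuous.continuousOn ?_ ?_ <;>
    rw [interior_Ici]
  · exact fun x hx ↦ (h.hasDerivAt x hx).differentiableAt.differentiableWithinAt
  · intro x hx y hy hxy
    have hx0 : 0 < x := one_pos.trans hx
    rw [(h.hasDerivAt x hx).deriv, (h.hasDerivAt y hy).deriv, neg_div, neg_div, neg_le_neg_iff]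
    have := (h.pos (x - 1)).le
    gcongr
    exact h.antitone (by linarith)

lemma decayRate_pos (h : IsDickmanExt ρ) (ht : 1 ≤ t) : 0 < decayRate ρ t := by
  have := h.pos t
  have := h.pos (t - 1)
  unfold decayRate
  positivity

lemma continuousOn_decayRate (h : IsDickmanExt ρ) : ContinuousOn (decayRate ρ) (Ici 1) := by
  have := h.continuous
  refine ContinuousOn.div (by fun_prop) (by fun_prop) fun x hx ↦ ?_
  have : 0 < x := one_pos.trans_le hx
  exact (mul_pos this (h.pos x)).ne'

lemma hasDerivAt_decayRate (h : IsDickmanExt ρ) (ht : 2 < t) :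
    HasDerivAt (decayRate ρ)
      (decayRate ρ t * (decayRate ρ t - decayRate ρ (t - 1) - 1 / t)) t := by
  have ht0 : t ≠ 0 := by linarith
  have ht1 : t - 1 ≠ 0 := by linarith
  have hρt := (h.pos t).ne'
  have hρt1 := (h.pos (t - 1)).ne'
  refine ((h.hasDerivAt (t - 1) (by linarith)).comp_sub_const t 1 |>.div
    (h.hasDerivAt_mul_self (by linarith)) (by positivity)).congr_deriv ?_
  simp only [decayRate]
  field_simp
  ring

lemma hasDerivAt_log (h : IsDickmanExt ρ) (ht : 1 < t) :
    HasDerivAt (fun x ↦ log (ρ x)) (-decayRate ρ t) t :=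
  ((h.hasDerivAt t ht).log (h.pos t).ne').congr_deriv <| by rw [decayRate, div_div, neg_div]

-- Since `ρ' = -rρ` for `r = decayRate ρ`, the left-hand side integrates `-ρ' - r (t - 1) ρ`.
lemma integral_decayRate_sub_mul (h : IsDickmanExt ρ) (ht : 2 ≤ t) :
    ∫ x in (t - 1)..t, (decayRate ρ x - decayRate ρ (t - 1)) * ρ x =
      t * ρ t * (decayRate ρ t - decayRate ρ (t - 1) - 1 / t) := by
  have hρ := h.continuous
  have hle : t - 1 ≤ t := (sub_one_lt t).le
  have subset : Icc (t - 1) t ⊆ Ici 1 := fun x hx ↦ (by linarith : 1 ≤ t - 1).trans hx.1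
  have integrable : IntervalIntegrable (fun x ↦ decayRate ρ x * ρ x) MeasureTheory.volume
      (t - 1) t := by
    refine ContinuousOn.intervalIntegrable ?_
    rw [uIcc_of_le hle]
    exact (h.continuousOn_decayRate.mono subset).mul hρ.continuousOn
  have ftc : ∫ x in (t - 1)..t, decayRate ρ x * ρ x = -ρ t - -ρ (t - 1) :=
    intervalIntegral.integral_eq_sub_of_hasDerivAt_of_le hle hρ.neg.continuousOn
      (fun x hx ↦ by
        have hx1 : 1 < x := by linarith [hx.1]
        have := (h.pos x).ne'
        refine (h.hasDerivAt x hx1).fun_neg.congr_deriv ?_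
        rw [decayRate, neg_div, neg_neg]
        field_simp) integrable
  have : t ≠ 0 := by linarith
  have := (h.pos t).ne'
  simp only [sub_mul]
  rw [intervalIntegral.integral_sub integrable (Continuous.intervalIntegrable (by fun_prop) _ _),
    intervalIntegral.integral_const_mul, h.integral_sub_one_self (by linarith), ftc,
    decayRate.eq_1 ρ t]
  field_simp
  ring

lemma strictMonoOn_decayRate_Icc_one_two (h : IsDickmanExt ρ) :
    StrictMonoOn (decayRate ρ) (Icc 1 2) := by
  have hρ := h.continuous
  have anti : StrictAntiOn (fun x ↦ x * ρ x) (Ici 1) :=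
    strictAntiOn_of_hasDerivWithinAt_neg (convex_Ici 1) (by fun_prop)
      (fun x hx ↦ (h.hasDerivAt_mul_self (interior_Ici.subset hx)).hasDerivWithinAt)
      fun x hx ↦ sub_neg.2 (h.lt_sub_one (interior_Ici.subset hx))
  intro x hx y hy hxy
  have hy0 : 0 < y * ρ y := mul_pos (by linarith [hy.1]) (h.pos y)
  rw [decayRate, decayRate, h.eq_one_of_le_one (x - 1) (by linarith [hx.2]),
    h.eq_one_of_le_one (y - 1) (by linarith [hy.2])]
  exact one_div_lt_one_div_of_lt hy0 (anti hx.1 hy.1 hxy)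

lemma strictMonoOn_decayRate_Icc (h : IsDickmanExt ρ) (ht : 2 ≤ t)
    (hpos : ∀ x ∈ Ioo 2 t, 0 < decayRate ρ x - decayRate ρ (x - 1) - 1 / x) :
    StrictMonoOn (decayRate ρ) (Icc 1 t) := by
  rw [← Icc_union_Icc_eq_Icc one_le_two ht]
  refine h.strictMonoOn_decayRate_Icc_one_two.union ?_ (isGreatest_Icc one_le_two) (isLeast_Icc ht)
  refine strictMonoOn_of_hasDerivWithinAt_pos (convex_Icc 2 t)
    (h.continuousOn_decayRate.mono fun x hx ↦ one_le_two.trans hx.1)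
    (f' := fun x ↦ decayRate ρ x * (decayRate ρ x - decayRate ρ (x - 1) - 1 / x)) ?_ ?_ <;>
    rw [interior_Icc]
  · exact fun x hx ↦ (h.hasDerivAt_decayRate hx.1).hasDerivWithinAt
  · exact fun x hx ↦ mul_pos (h.decayRate_pos (by linarith [hx.1])) (hpos x hx)

lemma decayRate_sub_sub_one_div_pos (h : IsDickmanExt ρ) (ht : 2 ≤ t) :
    0 < decayRate ρ t - decayRate ρ (t - 1) - 1 / t := by
  refine pos_of_forall_Ico_pos (f := fun t ↦ decayRate ρ t - decayRate ρ (t - 1) - 1 / t)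
    (a := 2) ?_ (fun s hs hpos ↦ ?_) ht
  · refine ((h.continuousOn_decayRate.mono (Ici_subset_Ici.2 one_le_two)).sub
      (h.continuousOn_decayRate.comp (by fun_prop) fun _ hx ↦ ?_)).sub
      (continuousOn_const.div continuousOn_id fun x hx ↦ ?_)
    · exact mem_Ici.2 (by linarith [mem_Ici.1 hx])
    · exact (zero_lt_two.trans_le hx).ne'
  have mono := h.strictMonoOn_decayRate_Icc hs fun x hx ↦ hpos x ⟨hx.1.le, hx.2⟩
  have integrand_cont : ContinuousOn
      (fun x ↦ (decayRate ρ x - decayRate ρ (s - 1)) * ρ x) (uIcc (s - 1) s) := by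
    rw [uIcc_of_le (sub_one_lt s).le]
    exact ((h.continuousOn_decayRate.mono fun x hx ↦
      (by linarith [hx.1] : 1 ≤ x)).sub continuousOn_const).mul h.continuous.continuousOn
  have integral_pos := intervalIntegral.intervalIntegral_pos_of_pos_on
    integrand_cont.intervalIntegrable (fun x hx ↦ mul_pos (sub_pos.2 <|
      mono ⟨by linarith, (sub_one_lt s).le⟩ ⟨by linarith [hx.1], hx.2.le⟩ hx.1) (h.pos x))
    (sub_one_lt s)
  rw [h.integral_decayRate_sub_mul hs] at integral_pos
  exact pos_of_mul_pos_right integral_pos (mul_pos (by linarith) (h.pos s)).le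

lemma strictMonoOn_decayRate (h : IsDickmanExt ρ) : StrictMonoOn (decayRate ρ) (Ici 1) :=
  fun _ hx y hy hxy ↦ h.strictMonoOn_decayRate_Icc (le_max_right y 2)
    (fun _ hz ↦ h.decayRate_sub_sub_one_div_pos hz.1.le)
    ⟨hx, hxy.le.trans (le_max_left y 2)⟩ ⟨hy, le_max_left y 2⟩ hxy

lemma one_le_decayRate (h : IsDickmanExt ρ) (ht : 1 ≤ t) : 1 ≤ decayRate ρ t := by
  have decayRate_one : decayRate ρ 1 = 1 := by simp [decayRate, h.eq_one_of_le_one]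
  simpa only [decayRate_one] using h.strictMonoOn_decayRate.monotoneOn self_mem_Ici ht ht

lemma log_sub_log_mem_Icc (h : IsDickmanExt ρ) (hx : 1 ≤ x) (hxy : x ≤ y) :
    log (ρ x) - log (ρ y) ∈ Icc ((y - x) * decayRate ρ x) ((y - x) * decayRate ρ y) := by
  rcases hxy.eq_or_lt with rfl | hxy
  · simp
  obtain ⟨z, ⟨hxz, hzy⟩, slope⟩ := exists_hasDerivAt_eq_slope (fun x ↦ log (ρ x))
    (fun t ↦ -decayRate ρ t) hxy (h.continuous.log fun t ↦ (h.pos t).ne').continuousOn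
    fun z hz ↦ h.hasDerivAt_log (by linarith [hz.1])
  have hyx : 0 < y - x := sub_pos.2 hxy
  have hz : 1 ≤ z := hx.trans hxz.le
  have mean : log (ρ x) - log (ρ y) = (y - x) * decayRate ρ z := by
    rw [eq_div_iff hyx.ne'] at slope
    linarith
  have mono := h.strictMonoOn_decayRate.monotoneOn
  rw [mean]
  exact ⟨mul_le_mul_of_nonneg_left (mono hx hz hxz.le) hyx.le,
    mul_le_mul_of_nonneg_left (mono hz (hz.trans hzy.le) hzy.le) hyx.le⟩

lemma le_mul_exp_decayRate (h : IsDickmanExt ρ) (hxy : x ≤ y) (hy : 1 ≤ y) :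
    ρ x ≤ ρ y * exp ((y - x) * decayRate ρ y) := by
  wlog hx : 1 ≤ x generalizing x
  · have hx : x ≤ 1 := (not_le.1 hx).le
    rw [h.eq_one_of_le_one x hx, ← h.eq_one_of_le_one 1 le_rfl]
    refine (this hy le_rfl).trans ?_
    have := (h.pos y).le
    have := (h.decayRate_pos hy).le
    gcongr
  have := (h.log_sub_log_mem_Icc hx hxy).2
  rw [← log_le_log_iff (h.pos x) (mul_pos (h.pos y) (exp_pos _)),
    log_mul (h.pos y).ne' (exp_pos _).ne', log_exp]
  linarith

lemma mul_exp_decayRate_le (h : IsDickmanExt ρ) (ht : 1 ≤ t) (htx : t ≤ x) (hxy : x ≤ y) :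
    ρ y * exp ((y - x) * decayRate ρ t) ≤ ρ x := by
  have hx : 1 ≤ x := ht.trans htx
  have := (h.log_sub_log_mem_Icc hx hxy).1
  have := mul_le_mul_of_nonneg_left (h.strictMonoOn_decayRate.monotoneOn ht hx htx)
    (sub_nonneg.2 hxy)
  rw [← log_le_log_iff (mul_pos (h.pos y) (exp_pos _)) (h.pos x),
    log_mul (h.pos y).ne' (exp_pos _).ne', log_exp]
  linarith

end IsDickmanExt

lemma log_three_add_log_two_le : log 3 + log 2 ≤ 2 := by
  rw [← log_mul (by norm_num) (by norm_num), log_le_iff_le_exp (by norm_num)]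
  have : exp 2 = exp 1 * exp 1 := by rw [← exp_add]; norm_num
  nlinarith [exp_one_gt_d9]

lemma integral_exp_sub_mul (t : ℝ) {r : ℝ} (hr : r ≠ 0) :
    ∫ x in (t - 1)..t, exp ((t - x) * r) = (exp r - 1) / r := by
  have ftc := intervalIntegral.integral_comp_sub_left (fun s ↦ exp (s * r)) t
    (a := t - 1) (b := t)
  rw [sub_self, sub_sub_cancel, intervalIntegral.integral_comp_mul_right exp hr] at ftc
  rw [ftc, integral_exp]
  simp [div_eq_inv_mul]

namespace IsDickmanExt

open Set

variable {ρ : ℝ → ℝ} {t u x y : ℝ}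

lemma one_add_mul_decayRate_le_exp (h : IsDickmanExt ρ) (ht : 1 ≤ t) :
    1 + t * decayRate ρ t ≤ exp (decayRate ρ t) := by
  have hr := h.decayRate_pos ht
  have mono : ∫ x in (t - 1)..t, ρ x ≤
      ∫ x in (t - 1)..t, ρ t * exp ((t - x) * decayRate ρ t) :=
    intervalIntegral.integral_mono_on (sub_one_lt t).le (h.continuous.intervalIntegrable _ _)
      (Continuous.intervalIntegrable (by fun_prop) _ _)
      fun x hx ↦ h.le_mul_exp_decayRate hx.2 ht
  rw [intervalIntegral.integral_const_mul, integral_exp_sub_mul t hr.ne',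
    h.integral_sub_one_self ht, mul_comm t, mul_le_mul_iff_right₀ (h.pos t), le_div_iff₀ hr] at mono
  linarith

lemma exp_decayRate_le_one_add_mul (h : IsDickmanExt ρ) (ht : 1 ≤ t) :
    exp (decayRate ρ t) ≤ 1 + (t + 1) * decayRate ρ t := by
  have hr := h.decayRate_pos ht
  have mono : ∫ x in (t + 1 - 1)..(t + 1), ρ (t + 1) * exp ((t + 1 - x) * decayRate ρ t) ≤
      ∫ x in (t + 1 - 1)..(t + 1), ρ x :=
    intervalIntegral.integral_mono_on (sub_one_lt (t + 1)).le
      (Continuous.intervalIntegrable (by fun_prop) _ _) (h.continuous.intervalIntegrable _ _)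
      fun x hx ↦ h.mul_exp_decayRate_le ht (by linarith [hx.1]) hx.2
  rw [intervalIntegral.integral_const_mul, integral_exp_sub_mul _ hr.ne',
    h.integral_sub_one_self (by linarith), mul_comm (t + 1),
    mul_le_mul_iff_right₀ (h.pos (t + 1)), div_le_iff₀ hr] at mono
  linarith

lemma log_add_log_decayRate_le (h : IsDickmanExt ρ) (ht : 1 ≤ t) :
    log t + log (decayRate ρ t) ≤ decayRate ρ t := by
  have hr := h.decayRate_pos ht
  rw [← log_mul (by positivity) hr.ne', log_le_iff_le_exp (by positivity)]
  linarith [h.one_add_mul_decayRate_le_exp ht]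

lemma decayRate_le_log_add_log (h : IsDickmanExt ρ) (ht : 1 ≤ t) :
    decayRate ρ t ≤ log 3 + log t + log (decayRate ρ t) := by
  have hr := h.one_le_decayRate ht
  rw [← log_mul (by norm_num) (by positivity), ← log_mul (by positivity) (by positivity),
    le_log_iff_exp_le (by positivity)]
  nlinarith [h.exp_decayRate_le_one_add_mul ht]

lemma one_add_log_le_two_mul_decayRate (h : IsDickmanExt ρ) (ht : 1 ≤ t) :
    1 + log t ≤ 2 * decayRate ρ t := by
  have := h.one_le_decayRate ht
  linarith [log_nonneg this, h.log_add_log_decayRate_le ht]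

lemma decayRate_le_two_mul (h : IsDickmanExt ρ) (ht : 1 ≤ t) :
    decayRate ρ t ≤ 2 * (1 + log t) := by
  have hr := h.decayRate_pos ht
  have log_half_le := log_le_sub_one_of_pos (half_pos hr)
  rw [log_div hr.ne' two_ne_zero] at log_half_le
  linarith [h.decayRate_le_log_add_log ht, log_three_add_log_two_le]

lemma decayRate_mem_Icc (h : IsDickmanExt ρ) (ht : 1 ≤ t) :
    decayRate ρ t ∈ Icc (log t + log (1 + log t) - 1) (log t + log (1 + log t) + 2) := by
  have hr := h.decayRate_pos ht
  have hlog := log_nonneg ht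
  have lower := log_le_log (by positivity) (h.one_add_log_le_two_mul_decayRate ht)
  have upper := log_le_log hr (h.decayRate_le_two_mul ht)
  rw [log_mul two_ne_zero (by positivity)] at lower upper
  constructor
  · linarith [h.log_add_log_decayRate_le ht, log_two_lt_d9]
  · linarith [h.decayRate_le_log_add_log ht, log_three_add_log_two_le]

lemma abs_log_add_mul_log_add_mul_log_le (h : IsDickmanExt ρ) (hu : 1 ≤ u) :
    |log (ρ u) + u * log u + u * log (1 + log u)| ≤ 3 * u := by
  rcases hu.eq_or_lt with rfl | hu'
  · simp [h.eq_one_of_le_one]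
  have log_pos {t : ℝ} (ht : 1 < t) : 0 < 1 + log t := by linarith [log_nonneg ht.le]
  have hasDerivAt (t : ℝ) (ht : 1 < t) : HasDerivAt
      (fun t ↦ log (ρ t) + t * log t + t * log (1 + log t))
      (-decayRate ρ t + (log t + 1) + (log (1 + log t) + 1 / (1 + log t))) t := by
    have ht0 : t ≠ 0 := by positivity
    have := (log_pos ht).ne'
    refine (((h.hasDerivAt_log ht).add ((hasDerivAt_id t).mul (Real.hasDerivAt_log ht0))).add
      ((hasDerivAt_id t).mul (((Real.hasDerivAt_log ht0).const_add 1).log this))).congr_deriv ?_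
    simp only [id]
    field_simp
  have continuousOn : ContinuousOn
      (fun t ↦ log (ρ t) + t * log t + t * log (1 + log t)) (Icc 1 u) := by
    have continuousOn_log : ContinuousOn log (Icc 1 u) :=
      continuousOn_id.log fun t ht ↦ (zero_lt_one.trans_le ht.1).ne'
    refine ((h.continuous.log fun t ↦ (h.pos t).ne').continuousOn.add
      (continuousOn_id.mul continuousOn_log)).add (continuousOn_id.mul
        ((continuousOn_const.add continuousOn_log).log fun t ht ↦ ?_))
    exact (add_pos_of_pos_of_nonneg one_pos (log_nonneg ht.1)).ne'
  obtain ⟨c, ⟨hc, -⟩, slope⟩ := exists_hasDerivAt_eq_slope _ _ hu' continuousOn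
    fun t ht ↦ hasDerivAt t ht.1
  rw [eq_div_iff (sub_pos.2 hu').ne'] at slope
  simp only [h.eq_one_of_le_one 1 le_rfl, log_one, mul_zero, add_zero, sub_zero] at slope
  obtain ⟨lower, upper⟩ := h.decayRate_mem_Icc hc.le
  have inv_nonneg : 0 ≤ 1 / (1 + log c) := (one_div_pos.2 (log_pos hc)).le
  have inv_le_one : 1 / (1 + log c) ≤ 1 :=
    div_le_one_of_le₀ (by linarith [log_nonneg hc.le]) (log_pos hc).le
  rw [← slope, abs_mul, abs_of_pos (sub_pos.2 hu')]
  exact mul_le_mul (abs_le.2 ⟨by linarith, by linarith⟩) (by linarith) (by linarith) (by norm_num)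

end IsDickmanExt

section Trapezoid

open Set

variable {f : ℝ → ℝ}

-- Averaging `f` with its reflection replaces the chord of `f` by the constant `f a + f b`.
lemma integral_le_of_convexOn {a b : ℝ} (hab : a ≤ b) (hf : ConvexOn ℝ (Icc a b) f)
    (hcont : ContinuousOn f (Icc a b)) :
    ∫ x in a..b, f x ≤ (b - a) * ((f a + f b) / 2) := by
  have reflect_le (x : ℝ) (hx : x ∈ Icc a b) : f x + f (a + b - x) ≤ f a + f b := by
    rw [← segment_eq_Icc hab] at hx
    obtain ⟨s, t, hs, ht, hst, rfl⟩ := hx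
    have ha := left_mem_Icc.2 hab
    have hb := right_mem_Icc.2 hab
    have hx := hf.2 ha hb hs ht hst
    have hx' := hf.2 ha hb ht hs (by rw [add_comm, hst])
    have reflect : a + b - (s • a + t • b) = t • a + s • b := by
      rw [smul_eq_mul, smul_eq_mul, smul_eq_mul, smul_eq_mul]
      linear_combination -(a + b) * hst
    rw [reflect]
    simp only [smul_eq_mul] at hx hx' ⊢
    linear_combination hx + hx' + (f a + f b) * hst
  have hf_int : IntervalIntegrable f MeasureTheory.volume a b :=
    hcont.intervalIntegrable_of_Icc hab
  have hf_int_reflect : IntervalIntegrable (fun x ↦ f (a + b - x)) MeasureTheory.volume a b := by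
    simpa using (hf_int.comp_sub_left (a + b)).symm
  have mono := intervalIntegral.integral_mono_on hab (hf_int.add hf_int_reflect)
    intervalIntegrable_const reflect_le
  rw [intervalIntegral.integral_add hf_int hf_int_reflect, intervalIntegral.integral_comp_sub_left,
    add_sub_cancel_right, add_sub_cancel_left, intervalIntegral.integral_const,
    smul_eq_mul] at mono
  linarith

lemma integral_le_sum_sub_of_convexOn {m : ℕ} (hf : ConvexOn ℝ (Icc 0 (m : ℝ)) f)
    (hcont : ContinuousOn f (Icc 0 (m : ℝ))) :
    ∫ x in (0 : ℝ)..m, f x ≤ ∑ i ∈ Finset.range m, f (i + 1) - (f m - f 0) / 2 := by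
  induction m with
  | zero => simp
  | succ m ih =>
    rw [Nat.cast_add_one] at hf hcont ⊢
    have init : Icc 0 (m : ℝ) ⊆ Icc 0 (m + 1 : ℝ) := Icc_subset_Icc_right (by linarith)
    have last : Icc (m : ℝ) (m + 1) ⊆ Icc 0 (m + 1 : ℝ) := Icc_subset_Icc_left m.cast_nonneg
    have hm : (m : ℝ) ≤ m + 1 := by linarith
    have init_le := ih (hf.subset init (convex_Icc _ _)) (hcont.mono init)
    have last_le := integral_le_of_convexOn hm (hf.subset last (convex_Icc _ _))
      (hcont.mono last)
    rw [← intervalIntegral.integral_add_adjacent_intervals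
      ((hcont.mono init).intervalIntegrable_of_Icc m.cast_nonneg)
      ((hcont.mono last).intervalIntegrable_of_Icc hm), Finset.sum_range_succ]
    linarith

end Trapezoid

section Shift

variable {x y a : ℝ}

lemma div_sub_add_div_add (hy : y ≠ 0) (hya : y + a ≠ 0) :
    x / y - (x + a) / (y + a) = a * (x / y - 1) / (y + a) := by
  field_simp
  ring

lemma add_div_add_mem_Icc (hy : 0 < y) (ha : 0 ≤ a) (hyx : y ≤ x) :
    (x + a) / (y + a) ∈ Set.Icc 1 (x / y) := by
  have hya : 0 < y + a := by positivity
  refine ⟨(one_le_div hya).2 (by linarith), sub_nonneg.1 ?_⟩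
  rw [div_sub_add_div_add hy.ne' hya.ne']
  have := sub_nonneg.2 ((one_le_div hy).2 hyx)
  positivity

end Shift

lemma one_div_add_half_le_log_add_one_sub_log {x : ℝ} (hx : 0 < x) :
    1 / (x + 1 / 2) ≤ log (x + 1) - log x := by
  rw [← log_div (by positivity) hx.ne']
  convert le_log_one_add_of_nonneg (one_div_pos.2 hx).le using 1
  · field_simp
    ring
  · rw [add_div, div_self hx.ne']

lemma one_sub_log_le_permProb {m n : ℕ} (hm : 1 ≤ m) {a : ℝ} (ha : 0 < a) (ha2 : a ≤ 1 / 2)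
    (hmn : m ≤ n) (hn : n ≤ 2 * m) : 1 - log ((n + a) / (m + a)) ≤ permProb n m := by
  induction n, hmn using Nat.le_induction with
  | base => rw [permProb_eq_one_of_le le_rfl, div_self (by positivity), log_one, sub_zero]
  | succ n hmn ih =>
    have ih := ih (by omega)
    have recurrence := succ_mul_permProb_succ hm hmn
    rw [permProb_eq_one_of_le (n := n - m) (by omega)] at recurrence
    have step : permProb (n + 1) m = permProb n m - 1 / (n + 1) := by
      field_simp
      linarith
    have log_step := one_div_add_half_le_log_add_one_sub_log (show 0 < n + a by positivity)
    have : 1 / ((n : ℝ) + 1) ≤ 1 / (n + a + 1 / 2) :=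
      one_div_le_one_div_of_le (by positivity) (by linarith)
    rw [log_div (by positivity) (by positivity)] at ih ⊢
    rw [step, Nat.cast_add_one, add_right_comm]
    linarith

namespace IsDickmanExt

open Finset

variable {ρ : ℝ → ℝ} {a v w x y : ℝ} {m n N : ℕ}

lemma integral_comp_sub_div (h : IsDickmanExt ρ) (hv : 1 ≤ v) (hw : w ≠ 0) :
    ∫ s in (0 : ℝ)..w, ρ (v - s / w) = w * v * ρ v := by
  rw [intervalIntegral.integral_comp_sub_div _ hw v, div_self hw, zero_div, sub_zero,
    h.integral_sub_one_self hv, smul_eq_mul, mul_assoc]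

lemma monotone_comp_sub_div (h : IsDickmanExt ρ) (hw : 0 ≤ w) (v : ℝ) :
    Monotone fun s ↦ ρ (v - s / w) :=
  fun _ _ hst ↦ h.antitone (sub_le_sub_left (div_le_div_of_nonneg_right hst hw) v)

lemma convexOn_comp_sub_div (h : IsDickmanExt ρ) (hw : 0 < w) (hv : 2 ≤ v) :
    ConvexOn ℝ (Set.Iic w) fun s ↦ ρ (v - s / w) := by
  have one_le (s : ℝ) (hs : s ≤ w) : 1 ≤ v - s / w := by linarith [div_le_one_of_le₀ hs hw.le]
  refine ⟨convex_Iic w, fun s hs t ht p q hp hq hpq ↦ ?_⟩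
  convert h.convexOn.2 (one_le s hs) (one_le t ht) hp hq hpq using 2
  simp only [smul_eq_mul]
  linear_combination -v * hpq

lemma sum_comp_sub_div_add_le (h : IsDickmanExt ρ) (hv : 1 ≤ v) (m : ℕ) :
    ∑ i ∈ range m, ρ (v - (i + 1) / (m + 1)) + ρ v ≤ (m + 1) * v * ρ v := by
  have hm : (0 : ℝ) < m + 1 := m.cast_add_one_pos
  have left_sum := ((h.monotone_comp_sub_div hm.le v).monotoneOn
    (Set.Icc (0 : ℝ) (0 + (m + 1 : ℕ)))).sum_le_integral
  simp only [zero_add, Nat.cast_add_one] at left_sum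
  rw [h.integral_comp_sub_div hv hm.ne', sum_range_succ'] at left_sum
  simpa using left_sum

lemma permProb_le (h : IsDickmanExt ρ) (hm : 1 ≤ m) (n : ℕ) :
    permProb n m ≤ ρ ((n + 1) / (m + 1)) := by
  induction n using Nat.strong_induction_on with
  | _ n ih =>
  have hm1 : (0 : ℝ) < m + 1 := m.cast_add_one_pos
  rcases le_or_gt n m with hnm | hmn
  · rw [permProb_eq_one_of_le hnm, h.eq_one_of_le_one]
    exact div_le_one_of_le₀ (by gcongr) hm1.le
  have hv : 1 ≤ ((n : ℝ) + 1) / (m + 1) := by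
    rw [one_le_div hm1]
    gcongr
  have window := h.sum_comp_sub_div_add_le hv m
  rw [mul_div_cancel₀ _ hm1.ne'] at window
  have hn : (0 : ℝ) < n := Nat.cast_pos.2 (by omega)
  refine le_of_mul_le_mul_left ?_ hn
  calc n * permProb n m
      = ∑ i ∈ range m, permProb (n - (i + 1)) m := by rw [mul_permProb hm, min_eq_left hmn.le]
    _ ≤ ∑ i ∈ range m, ρ ((n + 1) / (m + 1) - (i + 1) / (m + 1)) := by
        refine sum_le_sum fun i hi ↦ (ih (n - (i + 1)) (by omega)).trans_eq ?_
        rw [Nat.cast_sub (by have := mem_range.1 hi; omega), ← sub_div]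
        push_cast
        ring_nf
    _ ≤ n * ρ ((n + 1) / (m + 1)) := by linarith

lemma le_three_mul (h : IsDickmanExt ρ) (hxy : x ≤ y) (hy : 1 ≤ y)
    (hr : (y - x) * decayRate ρ y ≤ 1) : ρ x ≤ 3 * ρ y := by
  have exp_le : exp ((y - x) * decayRate ρ y) ≤ 3 := by
    linarith [exp_le_exp.2 hr, exp_one_lt_d9]
  linarith [h.le_mul_exp_decayRate hxy hy, mul_le_mul_of_nonneg_left exp_le (h.pos y).le]

lemma three_half_mul_le (h : IsDickmanExt ρ) (hx : 1 ≤ x) (hxy : x + 1 / 2 ≤ y) :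
    3 / 2 * ρ y ≤ ρ x := by
  have exp_ge : 3 / 2 ≤ exp ((y - x) * decayRate ρ 1) := by
    have := h.one_le_decayRate le_rfl
    nlinarith [add_one_le_exp ((y - x) * decayRate ρ 1)]
  linarith [h.mul_exp_decayRate_le le_rfl hx (by linarith : x ≤ y),
    mul_le_mul_of_nonneg_left exp_ge (h.pos y).le]

lemma le_sum_comp_sub_div_add (h : IsDickmanExt ρ) (hm : 1 ≤ m) (ha : 0 < a) (ha20 : a ≤ 1 / 20)
    (hv : 2 ≤ v) (hr : a * decayRate ρ v ≤ m) :
    (m + a) * v * ρ v ≤ ∑ i ∈ range m, ρ (v - (i + 1) / (m + a)) + a * ρ v := by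
  have hm1 : (1 : ℝ) ≤ m := Nat.one_le_cast.2 hm
  have hw : 0 < m + a := by positivity
  have hmw : (m : ℝ) ≤ m + a := by linarith
  have hcont : Continuous fun s ↦ ρ (v - s / (m + a)) :=
    h.continuous.comp (by fun_prop)
  have init : ∫ s in (0 : ℝ)..m, ρ (v - s / (m + a)) ≤
      ∑ i ∈ range m, ρ (v - (i + 1) / (m + a)) - (ρ (v - m / (m + a)) - ρ v) / 2 := by
    simpa using integral_le_sum_sub_of_convexOn ((h.convexOn_comp_sub_div hw hv).subset
      (fun s hs ↦ hs.2.trans hmw) (convex_Icc 0 (m : ℝ))) hcont.continuousOn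
  have last : ∫ s in (m : ℝ)..(m + a), ρ (v - s / (m + a)) ≤ a * ρ (v - 1) := by
    have := intervalIntegral.integral_mono_on (μ := MeasureTheory.volume) hmw
      (hcont.intervalIntegrable _ _) intervalIntegrable_const
      fun s hs ↦ h.monotone_comp_sub_div hw.le v hs.2
    simpa [div_self hw.ne'] using this
  have half_le : 1 / 2 ≤ m / (m + a) := by rw [le_div_iff₀ hw]; linarith
  have le_one : m / (m + a) ≤ 1 := div_le_one_of_le₀ hmw hw.le
  have growth : 3 / 2 * ρ v ≤ ρ (v - m / (m + a)) :=
    h.three_half_mul_le (by linarith) (by linarith)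
  have corner : ρ (v - 1) ≤ 3 * ρ (v - m / (m + a)) := by
    refine h.le_three_mul (by linarith) (by linarith) ?_
    have width : v - m / (m + a) - (v - 1) = a / (m + a) := by field_simp; ring
    rw [width, div_mul_eq_mul_div, div_le_one hw]
    have := h.strictMonoOn_decayRate.monotoneOn (show 1 ≤ v - m / (m + a) by linarith)
      (show 1 ≤ v by linarith) (by linarith)
    nlinarith
  rw [← h.integral_comp_sub_div (by linarith) hw.ne',
    ← intervalIntegral.integral_add_adjacent_intervals (hcont.intervalIntegrable 0 m)
      (hcont.intervalIntegrable m (m + a))]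
  nlinarith [h.pos v, h.pos (v - m / (m + a))]

lemma le_permProb (h : IsDickmanExt ρ) (hm : 1 ≤ m) (ha : 0 < a) (ha20 : a ≤ 1 / 20)
    (hr : a * decayRate ρ (N / m) ≤ m) (hnN : n ≤ N) :
    ρ ((n + a) / (m + a)) ≤ permProb n m := by
  induction n using Nat.strong_induction_on with
  | _ n ih =>
  have hm0 : (0 : ℝ) < m := Nat.cast_pos.2 hm
  have hw : 0 < m + a := by positivity
  rcases le_total n m with hnm | hmn
  · rw [permProb_eq_one_of_le hnm, h.eq_one_of_le_one]
    exact div_le_one_of_le₀ (by gcongr) hw.le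
  have hmn' : (m : ℝ) ≤ n := Nat.cast_le.2 hmn
  obtain ⟨hv, hvn⟩ := add_div_add_mem_Icc hm0 ha.le hmn'
  rcases le_or_gt n (2 * m) with hn2 | hn2
  · have hn2' : (n : ℝ) ≤ 2 * m := by exact_mod_cast hn2
    rw [h.eq_one_sub_log ⟨hv, by rw [div_le_iff₀ hw]; linarith⟩]
    exact one_sub_log_le_permProb hm ha (by linarith) hmn hn2
  have hn2' : 2 * (m : ℝ) + 1 ≤ n := by exact_mod_cast hn2
  have hvN : (n + a) / (m + a) ≤ N / m := hvn.trans (by gcongr)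
  have window := h.le_sum_comp_sub_div_add hm ha ha20
    (by rw [le_div_iff₀ hw]; linarith : 2 ≤ (n + a) / (m + a))
    ((mul_le_mul_of_nonneg_left
      (h.strictMonoOn_decayRate.monotoneOn hv (hv.trans hvN) hvN) ha.le).trans hr)
  rw [mul_div_cancel₀ _ hw.ne'] at window
  refine le_of_mul_le_mul_left ?_ (hm0.trans_le hmn')
  calc n * ρ ((n + a) / (m + a))
      ≤ ∑ i ∈ range m, ρ ((n + a) / (m + a) - (i + 1) / (m + a)) := by linarith
    _ ≤ ∑ i ∈ range m, permProb (n - (i + 1)) m := by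
        refine sum_le_sum fun i hi ↦ Eq.trans_le ?_ (ih (n - (i + 1)) (by omega) (by omega))
        rw [Nat.cast_sub (by have := mem_range.1 hi; omega), ← sub_div]
        push_cast
        ring_nf
    _ = n * permProb n m := by rw [mul_permProb hm, min_eq_left hmn]

end IsDickmanExt

section LogInequalities

variable {u x : ℝ}

lemma sub_one_mul_one_add_log_le (hu : 1 ≤ u) : (u - 1) * (1 + log u) ≤ 2 * (u * log u) := by
  have := mul_le_mul_of_nonneg_left (one_sub_inv_le_log_of_pos (one_pos.trans_le hu))
    (zero_le_one.trans hu)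
  rw [mul_sub, mul_one, mul_inv_cancel₀ (by positivity)] at this
  linarith [log_nonneg hu]

lemma mul_log_le_sub_one_mul_one_add_log (hu : 0 < u) : u * log u ≤ (u - 1) * (1 + log u) := by
  linarith [log_le_sub_one_of_pos hu]

lemma half_le_log_one_add (hx : 0 ≤ x) (hx1 : x ≤ 1) : x / 2 ≤ log (1 + x) := by
  refine le_trans ?_ (le_log_one_add_of_nonneg hx)
  rw [div_le_div_iff₀ (by norm_num) (by positivity)]
  nlinarith

lemma one_half_le_log_one_add (hx : 1 ≤ x) : 1 / 2 ≤ log (1 + x) :=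
  (half_le_log_one_add zero_le_one le_rfl).trans (log_le_log (by norm_num) (by linarith))

lemma log_one_add_le (hx : 0 ≤ x) : log (1 + x) ≤ x := by
  linarith [log_le_sub_one_of_pos (show 0 < 1 + x by positivity)]

end LogInequalities

lemma mul_log_one_add_nonneg {m n : ℕ} (hm : 1 ≤ m) (hmn : m ≤ n) :
    0 ≤ n / m * log (1 + log (n / m) / m) := by
  have hlog : 0 ≤ log (n / m) :=
    log_nonneg ((one_le_div (Nat.cast_pos.2 hm)).2 (Nat.cast_le.2 hmn))
  exact mul_nonneg (by positivity) (log_nonneg (le_add_of_nonneg_right (by positivity)))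

namespace IsDickmanExt

variable {ρ : ℝ → ℝ} {a K u v : ℝ} {m n : ℕ}

lemma one_add_log_le_three_mul_decayRate (h : IsDickmanExt ρ) (hv : 1 ≤ v) (hu : 0 < u)
    (huv : u ≤ 2 * v) : 1 + log u ≤ 3 * decayRate ρ v := by
  have log_le := log_le_log hu huv
  rw [log_mul two_ne_zero (by positivity)] at log_le
  linarith [h.one_le_decayRate hv, h.one_add_log_le_two_mul_decayRate hv, log_two_lt_d9]

lemma log_permProb_sub_log_le_of_log_le (h : IsDickmanExt ρ) (hm : 1 ≤ m) (hmn : m ≤ n)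
    (hu : log (n / m) ≤ m) :
    log (permProb n m) - log (ρ (n / m)) ≤ 8 * (n / m * log (1 + log (n / m) / m)) := by
  have hm0 : (0 : ℝ) < m := Nat.cast_pos.2 hm
  have hmn' : (m : ℝ) ≤ n := Nat.cast_le.2 hmn
  have shift := div_sub_add_div_add (x := n) hm0.ne' (by positivity : (m : ℝ) + 1 ≠ 0)
  obtain ⟨hv, hvu⟩ := add_div_add_mem_Icc hm0 zero_le_one hmn'
  have hu1 : 1 ≤ (n / m : ℝ) := (one_le_div hm0).2 hmn'
  set u := (n / m : ℝ)
  set v := ((n : ℝ) + 1) / (m + 1)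
  have hlog := log_nonneg hu1
  calc log (permProb n m) - log (ρ u)
      ≤ log (ρ v) - log (ρ u) := by
        gcongr
        exacts [permProb_pos n m, h.permProb_le hm n]
    _ ≤ (u - v) * decayRate ρ u := (h.log_sub_log_mem_Icc hv hvu).2
    _ ≤ (u - 1) / m * (2 * (1 + log u)) := by
        rw [shift, one_mul]
        have := sub_nonneg.2 hu1
        have := (h.decayRate_pos hu1).le
        gcongr
        · linarith
        · exact h.decayRate_le_two_mul hu1
    _ = 2 * ((u - 1) * (1 + log u)) / m := by ring
    _ ≤ 2 * (2 * (u * log u)) / m := by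
        gcongr 2 * ?_ / m
        exact sub_one_mul_one_add_log_le hu1
    _ = 8 * (u * (log u / m / 2)) := by ring
    _ ≤ 8 * (u * log (1 + log u / m)) := by
        gcongr
        exact half_le_log_one_add (by positivity) (div_le_one_of_le₀ hu hm0.le)

lemma log_permProb_sub_log_le_of_le_log (h : IsDickmanExt ρ) (hm : 1 ≤ m) (hmn : m ≤ n)
    (hu : m ≤ log (n / m)) :
    log (permProb n m) - log (ρ (n / m)) ≤ 15 * (n / m * log (1 + log (n / m) / m)) := by
  have hm1 : (1 : ℝ) ≤ m := Nat.one_le_cast.2 hm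
  have hm0 : (0 : ℝ) < m := one_pos.trans_le hm1
  have hmn' : (m : ℝ) ≤ n := Nat.cast_le.2 hmn
  have hn0 : (0 : ℝ) < n := hm0.trans_le hmn'
  have hu1 : 1 ≤ (n / m : ℝ) := (one_le_div hm0).2 hmn'
  have exp_le : exp m ≤ n := by
    rw [← le_log_iff_exp_le hn0]
    exact hu.trans (log_le_log (by positivity) (div_le_self hn0.le hm1))
  have rankin := log_permProb_le hm exp_le
  have dickman := (abs_le.1 (h.abs_log_add_mul_log_add_mul_log_le hu1)).1
  have log_n : log n = log (n / m) + log m := by rw [log_div hn0.ne' hm0.ne', sub_add_cancel]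
  rw [log_n] at rankin
  set u := (n / m : ℝ)
  have loglog_le : log (1 + log u) ≤ log (1 + log u / m) + log m := by
    have := log_nonneg hu1
    rw [← log_mul (by positivity) hm0.ne']
    gcongr
    rw [add_mul, div_mul_cancel₀ _ hm0.ne']
    linarith
  have half_le := one_half_le_log_one_add ((one_le_div hm0).2 hu)
  have hu0 : 0 ≤ u := zero_le_one.trans hu1
  linarith [mul_le_mul_of_nonneg_left loglog_le hu0, mul_le_mul_of_nonneg_left half_le hu0]

lemma le_log_permProb_sub_log_of_log_le (h : IsDickmanExt ρ) (hm : 1 ≤ m) (hmn : m ≤ n)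
    (ha : 0 < a) (ha20 : a ≤ 1 / 20) (haK : a * (2 * (1 + K)) ≤ 1) (hu : log (n / m) ≤ K * m) :
    a / 6 * (n / m * log (1 + log (n / m) / m)) ≤ log (permProb n m) - log (ρ (n / m)) := by
  have hm1 : (1 : ℝ) ≤ m := Nat.one_le_cast.2 hm
  have hm0 : (0 : ℝ) < m := one_pos.trans_le hm1
  have hmn' : (m : ℝ) ≤ n := Nat.cast_le.2 hmn
  have hma : 0 < m + a := by positivity
  have hu1 : 1 ≤ (n / m : ℝ) := (one_le_div hm0).2 hmn'
  have hr : a * decayRate ρ (n / m) ≤ m := by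
    have := mul_le_mul_of_nonneg_left (h.decayRate_le_two_mul hu1) ha.le
    nlinarith
  have subsolution := h.le_permProb hm ha ha20 hr le_rfl
  have shift := div_sub_add_div_add (x := n) hm0.ne' hma.ne'
  obtain ⟨hv, hvu⟩ := add_div_add_mem_Icc hm0 ha.le hmn'
  have huv : n / m ≤ 2 * ((n + a) / (m + a)) := by
    rw [mul_div_assoc', div_le_div_iff₀ hm0 hma]
    nlinarith
  set u := (n / m : ℝ)
  set v := (n + a) / (m + a)
  have hlog := log_nonneg hu1
  have := sub_nonneg.2 hu1
  calc a / 6 * (u * log (1 + log u / m))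
      ≤ a / 6 * (u * (log u / m)) := by
        gcongr
        exact log_one_add_le (by positivity)
    _ = a / (6 * m) * (u * log u) := by ring
    _ ≤ a / (6 * m) * ((u - 1) * (1 + log u)) := by
        gcongr a / (6 * m) * ?_
        exact mul_log_le_sub_one_mul_one_add_log (by positivity)
    _ = a * (u - 1) / (2 * m) * ((1 + log u) / 3) := by ring
    _ ≤ (u - v) * decayRate ρ v := by
        rw [shift]
        have := h.one_add_log_le_three_mul_decayRate hv (by positivity) huv
        gcongr <;> linarith
    _ ≤ log (ρ v) - log (ρ u) := (h.log_sub_log_mem_Icc hv hvu).1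
    _ ≤ log (permProb n m) - log (ρ u) := by
        gcongr
        exact h.pos v

lemma le_log_permProb_sub_log_of_le_log (h : IsDickmanExt ρ) (hm : 1 ≤ m) (hmn : m ≤ n)
    (hu : exp 8 * m ≤ log (n / m)) :
    1 / 4 * (n / m * log (1 + log (n / m) / m)) ≤ log (permProb n m) - log (ρ (n / m)) := by
  have hm0 : (0 : ℝ) < m := Nat.cast_pos.2 hm
  have hmn' : (m : ℝ) ≤ n := Nat.cast_le.2 hmn
  have hn0 : (0 : ℝ) < n := hm0.trans_le hmn'
  have hu1 : 1 ≤ (n / m : ℝ) := (one_le_div hm0).2 hmn'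
  have jumps := neg_mul_log_le_log_permProb hm (le_refl n)
  have dickman := (abs_le.1 (h.abs_log_add_mul_log_add_mul_log_le hu1)).2
  have log_n : log n = log (n / m) + log m := by rw [log_div hn0.ne' hm0.ne', sub_add_cancel]
  rw [log_n] at jumps
  set u := (n / m : ℝ)
  set x := log u / m with hx
  have exp_le : exp 8 ≤ x := (le_div_iff₀ hm0).2 hu
  have hx1 : 1 ≤ x := (one_le_exp (by norm_num)).trans exp_le
  have eight_le : 8 ≤ log x := (le_log_iff_exp_le (by positivity)).2 exp_le
  have le_loglog : log x + log m ≤ log (1 + log u) := by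
    rw [← log_mul (by positivity) hm0.ne', hx, div_mul_cancel₀ _ hm0.ne']
    exact log_le_log ((by positivity : 0 < exp 8 * m).trans_le hu) (by linarith)
  have log_one_add_le : log (1 + x) ≤ 1 + log x := by
    have := log_le_log (by positivity) (by linarith : 1 + x ≤ 2 * x)
    rw [log_mul two_ne_zero (by positivity)] at this
    linarith [log_two_lt_d9]
  have quarter_le : 1 / 4 * log (1 + x) ≤ log x - 3 := by linarith
  have hu0 : 0 ≤ u := zero_le_one.trans hu1
  linarith [mul_le_mul_of_nonneg_left quarter_le hu0, mul_le_mul_of_nonneg_left le_loglog hu0]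

lemma log_permProb_div_le (h : IsDickmanExt ρ) (hm : 1 ≤ m) (hmn : m ≤ n) :
    log (permProb n m / ρ (n / m)) ≤ 15 * (n / m * log (1 + log (n / m) / m)) := by
  rw [log_div (permProb_pos n m).ne' (h.pos _).ne']
  rcases le_total (log (n / m)) m with hu | hu
  · linarith [h.log_permProb_sub_log_le_of_log_le hm hmn hu, mul_log_one_add_nonneg hm hmn]
  · exact h.log_permProb_sub_log_le_of_le_log hm hmn hu

lemma le_log_permProb_div (h : IsDickmanExt ρ) (hm : 1 ≤ m) (hmn : m ≤ n) :
    1 / (48 * exp 8) * (n / m * log (1 + log (n / m) / m)) ≤ log (permProb n m / ρ (n / m)) := by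
  have exp_ge : 9 ≤ exp 8 := by linarith [add_one_le_exp 8]
  rw [log_div (permProb_pos n m).ne' (h.pos _).ne']
  rcases le_total (log (n / m)) (exp 8 * m) with hu | hu
  · convert h.le_log_permProb_sub_log_of_log_le (a := 1 / (8 * exp 8)) hm hmn (by positivity)
      (one_div_le_one_div_of_le (by norm_num) (by linarith)) ?_ hu using 2
    · field_simp
      norm_num
    · rw [one_div_mul_eq_div]
      exact div_le_one_of_le₀ (by linarith) (by positivity)
  · have const_le : 1 / (48 * exp 8) ≤ 1 / 4 :=
      one_div_le_one_div_of_le (by norm_num) (by linarith)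
    exact (mul_le_mul_of_nonneg_right const_le (mul_log_one_add_nonneg hm hmn)).trans
      (h.le_log_permProb_sub_log_of_le_log hm hmn hu)

end IsDickmanExt

/-- There exist absolute constants `c, C > 0` such that for all integers
`n ≥ m ≥ 1`, writing `u = n/m`, one has
`c·u·log(1 + (log u)/m) ≤ log(p_{n,m}/ρ(u)) ≤ C·u·log(1 + (log u)/m)`. -/
theorem stmt6 :
    ∃ c C : ℝ, 0 < c ∧ 0 < C ∧ ∀ n m : ℕ, 1 ≤ m → m ≤ n → ∀ ρ : ℝ → ℝ, IsDickman ρ →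
      ∀ u : ℝ, u = (n : ℝ) / (m : ℝ) →
      c * u * Real.log (1 + Real.log u / (m : ℝ)) ≤ Real.log (permProb n m / ρ u) ∧
        Real.log (permProb n m / ρ u) ≤ C * u * Real.log (1 + Real.log u / (m : ℝ)) := by
  refine ⟨1 / (48 * exp 8), 15, by positivity, by norm_num, ?_⟩
  rintro n m hm hmn ρ hρ u rfl
  have max_eq : max (n / m : ℝ) 0 = n / m := max_eq_left (by positivity)
  have lower := hρ.isDickmanExt.le_log_permProb_div hm hmn
  have upper := hρ.isDickmanExt.log_permProb_div_le hm hmn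
  rw [max_eq, ← mul_assoc] at lower upper
  exact ⟨lower, upper⟩
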